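/- arXiv:1103.0370 — 5 statements merged into one kernel-verified Lean document; each statement's English description precedes it below -/
import Mathlib

section
/- Let b be a positive integer and let a₁ and a₂ be integers with gcd(a₁, b) = 1 and gcd(a₂, b) = 1. If s(a₁, b) = s(a₂, b), then b divides (1 − a₁·a₂)·(a₁ − a₂). -/
/-- The sawtooth function `((x))`: equal to `x - ⌊x⌋ - 1/2` if `x` is not an
integer, and `0` if `x` is an integer. -/
def sawtooth (x : ℚ) : ℚ := if Int.fract x = 0 then 0 else Int.fract x - 1/2

/-- The classical Dedekind sum `s(a,b) = ∑_{k=0}^{b-1} ((k·a/b)) ((k/b))`. -/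
def dedekindSum (a : ℤ) (b : ℕ) : ℚ :=
  ∑ k ∈ Finset.range b, sawtooth ((k : ℚ) * a / b) * sawtooth ((k : ℚ) / b)

/-!
Multiplication by `a` permutes the residues modulo `b`, so the residues `r k = k * a % b` satisfy
`∑ (r k) ^ 2 = ∑ k ^ 2`. As `b ∣ r k - a * k`, expanding `∑ (r k - a * k) ^ 2 ≡ 0 [ZMOD b ^ 2]`
determines `2 * a * ∑ k * r k` modulo `b ^ 2`. Up to elementary terms `∑ k * r k` is
`b ^ 2 * s(a, b)`, and the outcome is that `N = 12 * b * s(a, b)` is an integer with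
`N * a ≡ a ^ 2 + 1 [ZMOD b]`. For two units `a₁`, `a₂` modulo `b` these congruences combine to
`(N₂ - N₁) * (a₁ * a₂) ≡ (1 - a₁ * a₂) * (a₁ - a₂) [ZMOD b]`, so `b` divides the right-hand side
exactly when `N₁ ≡ N₂ [ZMOD b]`, that is, when `12 * s(a₁, b)` and `12 * s(a₂, b)` differ by an
integer.
-/

section PowerSums

variable {R : Type*} [CommRing R]

lemma two_mul_sum_range_cast (n : ℕ) : 2 * ∑ k ∈ Finset.range n, (k : R) = n * (n - 1) := by
  induction n with
  | zero => simp
  | succ n ih => rw [Finset.sum_range_succ, mul_add, ih]; push_cast; ring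

lemma six_mul_sum_range_cast_sq (n : ℕ) :
    6 * ∑ k ∈ Finset.range n, (k : R) ^ 2 = n * (n - 1) * (2 * n - 1) := by
  induction n with
  | zero => simp
  | succ n ih => rw [Finset.sum_range_succ, mul_add, ih]; push_cast; ring

end PowerSums

lemma injOn_mul_emod {a b : ℤ} (hab : IsCoprime a b) :
    Set.InjOn (fun k : ℤ => k * a % b) (Set.Ico 0 b) := by
  intro x hx y hy hxy
  have hmul : b ∣ (y - x) * a := by
    rw [sub_mul]
    exact Int.ModEq.dvd hxy
  have hmod : x ≡ y [ZMOD b] := Int.modEq_iff_dvd.mpr (hab.symm.dvd_of_dvd_mul_right hmul)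
  rwa [Int.ModEq, Int.emod_eq_of_lt hx.1 hx.2, Int.emod_eq_of_lt hy.1 hy.2] at hmod

lemma sum_range_mul_emod {M : Type*} [AddCommMonoid M] {a : ℤ} {b : ℕ}
    (hab : IsCoprime a (b : ℤ)) (f : ℤ → M) :
    ∑ k ∈ Finset.range b, f (k * a % b) = ∑ k ∈ Finset.range b, f k := by
  rcases Nat.eq_zero_or_pos b with rfl | hb
  · simp
  have hcast (k : ℕ) : (((k * a % b).toNat : ℕ) : ℤ) = k * a % b :=
    Int.toNat_of_nonneg (Int.emod_nonneg _ (by positivity))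
  have hmaps : Set.MapsTo (fun k : ℕ => (k * a % b).toNat) (Finset.range b) (Finset.range b) := by
    intro k _
    have := Int.emod_lt_of_pos (k * a) (Int.natCast_pos.mpr hb)
    rw [Finset.mem_coe, Finset.mem_range]
    lia
  have hinj : Set.InjOn (fun k : ℕ => (k * a % b).toNat) (Finset.range b) := by
    intro x hx y hy hxy
    rw [Finset.mem_coe, Finset.mem_range] at hx hy
    have hres : (x * a % b : ℤ) = y * a % b := by rw [← hcast x, ← hcast y]; exact congrArg _ hxy
    exact_mod_cast injOn_mul_emod hab ⟨by positivity, by exact_mod_cast hx⟩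
      ⟨by positivity, by exact_mod_cast hy⟩ hres
  refine Finset.sum_nbij _ hmaps hinj
    (Finset.surjOn_of_injOn_of_card_le _ hmaps hinj le_rfl) fun k _ => ?_
  rw [hcast]

/-- The correlation sum `∑ k * r k` over `0 ≤ k < b`, where `r k = k * a % b` is the residue of
`k * a` in `[0, b)`; it is the nontrivial part of the Dedekind sum `s(a, b)`. -/
def residueCorrelation (a : ℤ) (b : ℕ) : ℤ := ∑ k ∈ Finset.range b, k * (k * a % b)

lemma residueCorrelation_modEq (a : ℤ) (b : ℕ) :
    residueCorrelation a b ≡ a * ∑ k ∈ Finset.range b, (k : ℤ) ^ 2 [ZMOD b] := by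
  rw [residueCorrelation, Finset.mul_sum]
  refine Int.ModEq.sum fun k _ => ?_
  calc (k * (k * a % b) : ℤ) ≡ k * (k * a) [ZMOD b] := Int.ModEq.mul_left _ (Int.mod_modEq _ _)
    _ = a * k ^ 2 := by ring

lemma two_mul_residueCorrelation_modEq {a : ℤ} {b : ℕ} (hab : IsCoprime a (b : ℤ)) :
    2 * a * residueCorrelation a b ≡
      (a ^ 2 + 1) * ∑ k ∈ Finset.range b, (k : ℤ) ^ 2 [ZMOD b ^ 2] := by
  have hsq : (b : ℤ) ^ 2 ∣ ∑ k ∈ Finset.range b, ((k * a % b : ℤ) - k * a) ^ 2 :=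
    Finset.dvd_sum fun k _ => pow_dvd_pow_of_dvd (Int.mod_modEq _ _).symm.dvd 2
  have hexpand : ∑ k ∈ Finset.range b, ((k * a % b : ℤ) - k * a) ^ 2 =
      ∑ k ∈ Finset.range b, (k * a % b : ℤ) ^ 2 - 2 * a * residueCorrelation a b +
        a ^ 2 * ∑ k ∈ Finset.range b, (k : ℤ) ^ 2 := by
    rw [residueCorrelation, Finset.mul_sum, Finset.mul_sum, ← Finset.sum_sub_distrib,
      ← Finset.sum_add_distrib]
    exact Finset.sum_congr rfl fun k _ => by ring
  rw [hexpand, sum_range_mul_emod hab (· ^ 2)] at hsq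
  refine Int.modEq_iff_dvd.mpr ?_
  convert hsq using 1
  ring

lemma sawtooth_intCast_div_of_not_dvd {m : ℤ} {b : ℕ} (hb : b ≠ 0) (hm : ¬ (b : ℤ) ∣ m) :
    sawtooth (m / b) = (m % b : ℤ) / b - 1 / 2 := by
  have hres : ((m % b : ℤ) / b : ℚ) ≠ 0 :=
    div_ne_zero (by exact_mod_cast mt Int.dvd_of_emod_eq_zero hm) (by exact_mod_cast hb)
  rw [sawtooth, Int.fract_div_intCast_eq_div_intCast_mod, if_neg hres]

lemma sawtooth_mul_sawtooth {a : ℤ} {b : ℕ} (hab : IsCoprime a (b : ℤ)) {k : ℕ} (hk : k < b) :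
    sawtooth (k * a / b) * sawtooth (k / b) =
      ((k * a % b : ℤ) / b - 1 / 2) * (k / b - 1 / 2) - if k = 0 then 1 / 4 else 0 := by
  rcases Nat.eq_zero_or_pos k with rfl | hk0
  · norm_num [sawtooth]
  have hkb : ¬ (b : ℤ) ∣ k := by exact_mod_cast Nat.not_dvd_of_pos_of_lt hk0 hk
  have hkab : ¬ (b : ℤ) ∣ k * a := fun h => hkb (hab.symm.dvd_of_dvd_mul_right h)
  have hfst := sawtooth_intCast_div_of_not_dvd (by lia) hkab
  have hsnd := sawtooth_intCast_div_of_not_dvd (by lia) hkb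
  rw [Int.emod_eq_of_lt (by positivity) (by exact_mod_cast hk)] at hsnd
  push_cast at hfst hsnd
  rw [hfst, hsnd, if_neg hk0.ne', sub_zero]

lemma dedekindSum_eq_residueCorrelation {a : ℤ} {b : ℕ} (hb : b ≠ 0)
    (hab : IsCoprime a (b : ℤ)) :
    dedekindSum a b = residueCorrelation a b / b ^ 2 - (b - 1) / 4 := by
  have hbq : (b : ℚ) ≠ 0 := by exact_mod_cast hb
  have hgauss : 2 * ∑ k ∈ Finset.range b, (k : ℚ) = b * (b - 1) := two_mul_sum_range_cast b
  have hperm : ∑ k ∈ Finset.range b, ((k * a % b : ℤ) : ℚ) = ∑ k ∈ Finset.range b, (k : ℚ) :=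
    sum_range_mul_emod hab fun m => (m : ℚ)
  calc dedekindSum a b
      = ∑ k ∈ Finset.range b, (((k * a % b : ℤ) / b - 1 / 2) * (k / b - 1 / 2) -
          if k = 0 then 1 / 4 else 0 : ℚ) :=
        Finset.sum_congr rfl fun k hk => sawtooth_mul_sawtooth hab (Finset.mem_range.mp hk)
    _ = ∑ k ∈ Finset.range b, (((k * a % b : ℤ) / b - 1 / 2) * (k / b - 1 / 2) : ℚ) - 1 / 4 := by
        rw [Finset.sum_sub_distrib, Finset.sum_ite_eq',
          if_pos (Finset.mem_range.mpr (Nat.pos_of_ne_zero hb))]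
    _ = ∑ k ∈ Finset.range b, ((k * (k * a % b : ℤ) : ℚ) / b ^ 2 -
          ((k * a % b : ℤ) + k) / (2 * b) + 1 / 4) - 1 / 4 := by
        congr 1
        refine Finset.sum_congr rfl fun k _ => ?_
        field_simp
        ring
    _ = residueCorrelation a b / b ^ 2 - (∑ k ∈ Finset.range b, (k : ℚ)) / b + b / 4 - 1 / 4 := by
        rw [Finset.sum_add_distrib, Finset.sum_sub_distrib, ← Finset.sum_div, ← Finset.sum_div,
          Finset.sum_add_distrib, hperm, Finset.sum_const, Finset.card_range, nsmul_eq_mul,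
          residueCorrelation]
        push_cast
        ring
    _ = residueCorrelation a b / b ^ 2 - (b - 1) / 4 := by
        field_simp
        linear_combination (-2 * b) * hgauss

lemma exists_intCast_eq_twelve_mul_dedekindSum {a : ℤ} {b : ℕ} (hb : b ≠ 0)
    (hab : IsCoprime a (b : ℤ)) : ∃ N : ℤ, 12 * b * dedekindSum a b = N := by
  have hbq : (b : ℚ) ≠ 0 := by exact_mod_cast hb
  have hsq : 6 * ∑ k ∈ Finset.range b, (k : ℤ) ^ 2 = b * (b - 1) * (2 * b - 1) :=
    six_mul_sum_range_cast_sq b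
  have hdvd : (b : ℤ) ∣ 12 * residueCorrelation a b := by
    rw [((residueCorrelation_modEq a b).mul_left 12).dvd_iff]
    exact ⟨2 * a * ((b - 1) * (2 * b - 1)), by linear_combination 2 * a * hsq⟩
  obtain ⟨c, hc⟩ := hdvd
  have hcq : (12 * residueCorrelation a b : ℚ) = b * c := by exact_mod_cast hc
  refine ⟨c - 3 * b * (b - 1), ?_⟩
  rw [dedekindSum_eq_residueCorrelation hb hab]
  push_cast
  field_simp
  linear_combination 4 * hcq

lemma mul_modEq_sq_add_one_of_eq_twelve_mul_dedekindSum {a N : ℤ} {b : ℕ} (hb : b ≠ 0)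
    (hab : IsCoprime a (b : ℤ)) (hN : 12 * b * dedekindSum a b = N) :
    N * a ≡ a ^ 2 + 1 [ZMOD b] := by
  have hbz : (b : ℤ) ≠ 0 := by exact_mod_cast hb
  have hbq : (b : ℚ) ≠ 0 := by exact_mod_cast hb
  have hsq : 6 * ∑ k ∈ Finset.range b, (k : ℤ) ^ 2 = b * (b - 1) * (2 * b - 1) :=
    six_mul_sum_range_cast_sq b
  have hcorr : 12 * residueCorrelation a b = b * (N + 3 * b * (b - 1)) := by
    have hcorrq : (12 * residueCorrelation a b : ℚ) = b * (N + 3 * b * (b - 1)) := by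
      rw [← hN, dedekindSum_eq_residueCorrelation hb hab]
      field_simp
      ring
    exact_mod_cast hcorrq
  obtain ⟨d, hd⟩ := (two_mul_residueCorrelation_modEq hab).dvd
  have hcancel : (a ^ 2 + 1) * ((b - 1) * (2 * b - 1)) - a * (N + 3 * b * (b - 1)) =
      b * (6 * d) := by
    apply mul_left_cancel₀ hbz
    linear_combination 6 * hd - (a ^ 2 + 1) * hsq + a * hcorr
  -- Reduce `hcancel` modulo `b`, using `(b - 1) * (2 * b - 1) = 1 + b * (2 * b - 3)`.
  refine Int.modEq_iff_dvd.mpr ⟨6 * d - (a ^ 2 + 1) * (2 * b - 3) + 3 * a * (b - 1), ?_⟩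
  linear_combination hcancel

lemma modEq_iff_dvd_of_mul_modEq_sq_add_one {a₁ a₂ b N₁ N₂ : ℤ} (h₁ : IsCoprime a₁ b)
    (h₂ : IsCoprime a₂ b) (hN₁ : N₁ * a₁ ≡ a₁ ^ 2 + 1 [ZMOD b])
    (hN₂ : N₂ * a₂ ≡ a₂ ^ 2 + 1 [ZMOD b]) :
    N₁ ≡ N₂ [ZMOD b] ↔ b ∣ (1 - a₁ * a₂) * (a₁ - a₂) := by
  have hdiff : (N₂ - N₁) * (a₁ * a₂) ≡ (1 - a₁ * a₂) * (a₁ - a₂) [ZMOD b] := by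
    convert (hN₂.mul_left a₁).sub (hN₁.mul_left a₂) using 1 <;> ring
  calc N₁ ≡ N₂ [ZMOD b] ↔ b ∣ N₂ - N₁ := Int.modEq_iff_dvd
    _ ↔ b ∣ (N₂ - N₁) * (a₁ * a₂) :=
      ⟨fun h => h.mul_right _, (h₁.mul_left h₂).symm.dvd_of_dvd_mul_right⟩
    _ ↔ b ∣ (1 - a₁ * a₂) * (a₁ - a₂) := hdiff.dvd_iff

theorem dedekindSum_eq_imp_dvd_general {a₁ a₂ : ℤ} {b : ℕ} (hb : b ≠ 0)
    (h₁ : IsCoprime a₁ (b : ℤ)) (h₂ : IsCoprime a₂ (b : ℤ)) :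
    (∃ m : ℤ, 12 * (dedekindSum a₁ b - dedekindSum a₂ b) = m) ↔
      (b : ℤ) ∣ (1 - a₁ * a₂) * (a₁ - a₂) := by
  obtain ⟨N₁, hs₁⟩ := exists_intCast_eq_twelve_mul_dedekindSum hb h₁
  obtain ⟨N₂, hs₂⟩ := exists_intCast_eq_twelve_mul_dedekindSum hb h₂
  have hN₁ := mul_modEq_sq_add_one_of_eq_twelve_mul_dedekindSum hb h₁ hs₁
  have hN₂ := mul_modEq_sq_add_one_of_eq_twelve_mul_dedekindSum hb h₂ hs₂
  have hbq : (b : ℚ) ≠ 0 := by exact_mod_cast hb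
  rw [← modEq_iff_dvd_of_mul_modEq_sq_add_one h₁ h₂ hN₁ hN₂, Int.modEq_comm, Int.modEq_iff_dvd]
  refine exists_congr fun m => ?_
  calc 12 * (dedekindSum a₁ b - dedekindSum a₂ b) = m
      ↔ (N₁ - N₂ : ℚ) = b * m := by
        rw [← hs₁, ← hs₂, ← mul_right_inj' hbq]
        ring_nf
    _ ↔ N₁ - N₂ = b * m := by exact_mod_cast Iff.rfl

theorem dedekindSum_eq_imp_dvd (b : ℕ) (hb : 0 < b) (a₁ a₂ : ℤ)
    (h₁ : Int.gcd a₁ b = 1) (h₂ : Int.gcd a₂ b = 1)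
    (h : dedekindSum a₁ b = dedekindSum a₂ b) :
    (b : ℤ) ∣ (1 - a₁ * a₂) * (a₁ - a₂) := by
  exact (dedekindSum_eq_imp_dvd_general hb.ne' (Int.isCoprime_iff_gcd_eq_one.mpr h₁)
    (Int.isCoprime_iff_gcd_eq_one.mpr h₂)).mp ⟨0, by rw [h]; simp⟩
end

section
/- Let p be a prime and let a₁ and a₂ be integers with gcd(a₁, p) = 1 and gcd(a₂, p) = 1. Then s(a₁, p) = s(a₂, p) if and only if a₁ ≡ a₂ (mod p) or a₁·a₂ ≡ 1 (mod p). -/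
/-!
Write `[y]` for the representative in `[0, b)` of a residue `y` modulo `b`. If `a` is a unit modulo
`b`, multiplication by `a` permutes the residues, so `∑ₓ ([a x] - a [x])²` is
`(a² + 1) ∑ₓ [x]² - 2 a ∑ₓ [a x] [x]`; each of its terms is divisible by `b²`. Expanding the
sawtooth functions expresses `s(a, b)` through `∑ₓ [a x] [x]`, and the result is the congruence
`12 a b s(a, b) ≡ a² + 1 (mod b)`. Hence `s(a₁, b) = s(a₂, b)` forces
`a₂ (a₁² + 1) ≡ a₁ (a₂² + 1)`, that is, `b ∣ (a₁ - a₂) (a₁ a₂ - 1)`, and a prime `b` divides one of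
the factors. Conversely, if `a₁ a₂ ≡ 1`, the substitution `x ↦ a₂ x` turns `s(a₁, b)` into
`s(a₂, b)`.
-/

theorem six_mul_sum_range_sq {R : Type*} [CommRing R] (n : ℕ) :
    6 * ∑ k ∈ Finset.range n, (k : R) ^ 2 = n * (n - 1) * (2 * n - 1) := by
  induction n with
  | zero => simp
  | succ n ih =>
    rw [Finset.sum_range_succ, mul_add, ih]
    push_cast
    ring

theorem sum_mul_left_of_isUnit {M N : Type*} [Monoid M] [Fintype M] [AddCommMonoid N] {a : M}
    (ha : IsUnit a) (f : M → N) : ∑ x, f (a * x) = ∑ x, f x :=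
  Equiv.sum_comp ha.unit.mulLeft f

section Residues

variable {b : ℕ} [NeZero b]

theorem sum_zmod_val_eq_sum_range {M : Type*} [AddCommMonoid M] (f : ℕ → M) :
    ∑ x : ZMod b, f x.val = ∑ k ∈ Finset.range b, f k := by
  cases b with
  | zero => exact absurd rfl (NeZero.ne 0)
  | succ n => exact Fin.sum_univ_eq_sum_range f (n + 1)

theorem sawtooth_val_intCast_div (n : ℤ) :
    sawtooth ((n : ZMod b).val / b) = sawtooth (n / b) := by
  have fract_eq : Int.fract (((n : ZMod b).val : ℚ) / b) = Int.fract ((n : ℚ) / b) := by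
    rw [Int.fract_div_intCast_eq_div_intCast_mod, Int.fract_div_natCast_eq_div_natCast_mod,
      Nat.mod_eq_of_lt (ZMod.val_lt _), ← ZMod.val_intCast, Int.cast_natCast]
  rw [sawtooth, sawtooth, fract_eq]

theorem sawtooth_val_div {x : ZMod b} (hx : x ≠ 0) :
    sawtooth (x.val / b) = x.val / b - 1 / 2 := by
  have fract_eq : Int.fract ((x.val : ℚ) / b) = x.val / b := by
    rw [Int.fract_div_natCast_eq_div_natCast_mod, Nat.mod_eq_of_lt x.val_lt]
  have val_div_ne_zero : (x.val : ℚ) / b ≠ 0 :=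
    div_ne_zero (Nat.cast_ne_zero.2 ((ZMod.val_ne_zero x).2 hx)) (NeZero.ne _)
  rw [sawtooth, fract_eq, if_neg val_div_ne_zero]

theorem dedekindSum_eq_sum_zmod (a : ℤ) :
    dedekindSum a b = ∑ x : ZMod b, sawtooth ((a * x).val / b) * sawtooth (x.val / b) := by
  rw [dedekindSum, ← sum_zmod_val_eq_sum_range]
  refine Finset.sum_congr rfl fun x _ => ?_
  have h := sawtooth_val_intCast_div (b := b) (x.val * a)
  push_cast [ZMod.natCast_zmod_val] at h
  rw [← h, mul_comm x]

theorem dedekindSum_eq_of_modEq {a₁ a₂ : ℤ} (h : a₁ ≡ a₂ [ZMOD b]) :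
    dedekindSum a₁ b = dedekindSum a₂ b := by
  simp only [dedekindSum_eq_sum_zmod, (ZMod.intCast_eq_intCast_iff a₁ a₂ b).2 h]

theorem dedekindSum_eq_of_mul_modEq_one {a₁ a₂ : ℤ} (h : a₁ * a₂ ≡ 1 [ZMOD b]) :
    dedekindSum a₁ b = dedekindSum a₂ b := by
  have mul_eq_one : (a₁ * a₂ : ZMod b) = 1 := by
    exact_mod_cast (ZMod.intCast_eq_intCast_iff (a₁ * a₂) 1 b).2 h
  rw [dedekindSum_eq_sum_zmod, dedekindSum_eq_sum_zmod,
    ← sum_mul_left_of_isUnit (IsUnit.of_mul_eq_one_right _ mul_eq_one)]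
  refine Finset.sum_congr rfl fun x _ => ?_
  rw [← mul_assoc, mul_eq_one, one_mul, mul_comm]

/-- The sum `∑ₓ [a x] [x]` over the residues modulo `b`, where `[y]` is the representative of `y` in
`[0, b)`. It carries the dependence of the Dedekind sum `s(a, b)` on `a`, and is integer-valued so
that congruences apply to it. -/
def sumValMulVal (a : ZMod b) : ℤ := ∑ x : ZMod b, ((a * x).val : ℤ) * x.val

theorem dedekindSum_eq_sumValMulVal {a : ℤ} (ha : IsUnit (a : ZMod b)) :
    dedekindSum a b = sumValMulVal (a : ZMod b) / b ^ 2 - (b - 1) / 4 := by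
  have hb : (b : ℚ) ≠ 0 := NeZero.ne _
  have sawtooth_mul (x : ZMod b) : sawtooth ((a * x).val / b) * sawtooth (x.val / b) =
      (a * x).val * x.val / b ^ 2 - (a * x).val / (2 * b) - x.val / (2 * b) + 1 / 4
        - if x = 0 then 1 / 4 else 0 := by
    rcases eq_or_ne x 0 with rfl | hx
    · simp [sawtooth]
    · rw [sawtooth_val_div (ha.mul_right_eq_zero.not.2 hx), sawtooth_val_div hx, if_neg hx]
      ring
  have sum_val : 2 * ∑ x : ZMod b, (x.val : ℚ) = b * (b - 1) := by
    have sum_val_mul_two : (∑ x : ZMod b, x.val) * 2 = b * (b - 1) := by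
      rw [sum_zmod_val_eq_sum_range fun k => k, Finset.sum_range_id_mul_two]
    rw [mul_comm, ← Nat.cast_pred (NeZero.pos b)]
    exact_mod_cast sum_val_mul_two
  rw [dedekindSum_eq_sum_zmod, Finset.sum_congr rfl fun x _ => sawtooth_mul x]
  simp only [Finset.sum_sub_distrib, Finset.sum_add_distrib, ← Finset.sum_div,
    sum_mul_left_of_isUnit ha fun x => (x.val : ℚ), Finset.sum_ite_eq', Finset.mem_univ, if_true,
    Finset.sum_const, Finset.card_univ, ZMod.card, nsmul_eq_mul]
  push_cast [sumValMulVal]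
  field_simp
  linear_combination (-4 * b : ℚ) * sum_val

theorem two_mul_sumValMulVal_modEq {a : ℤ} (ha : IsUnit (a : ZMod b)) :
    2 * a * sumValMulVal (a : ZMod b) ≡
      (a ^ 2 + 1) * ∑ x : ZMod b, (x.val : ℤ) ^ 2 [ZMOD b ^ 2] := by
  have sum_sq_sub : ∑ x : ZMod b, (((a * x).val : ℤ) - a * x.val) ^ 2 =
      (a ^ 2 + 1) * ∑ x : ZMod b, (x.val : ℤ) ^ 2 - 2 * a * sumValMulVal (a : ZMod b) :=
    calc
      _ = ∑ x : ZMod b, ((a * x).val : ℤ) ^ 2 + a ^ 2 * ∑ x : ZMod b, (x.val : ℤ) ^ 2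
            - 2 * a * sumValMulVal (a : ZMod b) := by
        rw [sumValMulVal, Finset.mul_sum, Finset.mul_sum, ← Finset.sum_add_distrib,
          ← Finset.sum_sub_distrib]
        exact Finset.sum_congr rfl fun x _ => by ring
      _ = _ := by
        rw [sum_mul_left_of_isUnit ha fun x => (x.val : ℤ) ^ 2]
        ring
  rw [Int.modEq_iff_dvd, ← sum_sq_sub]
  refine Finset.dvd_sum fun x _ => pow_dvd_pow_of_dvd ?_ 2
  rw [← ZMod.intCast_zmod_eq_zero_iff_dvd]
  simp

theorem twelve_mul_sumValMulVal_modEq {a : ℤ} (ha : IsUnit (a : ZMod b)) :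
    12 * a * sumValMulVal (a : ZMod b) ≡ (a ^ 2 + 1) * b [ZMOD b ^ 2] := by
  obtain ⟨c, hc⟩ := (two_mul_sumValMulVal_modEq ha).dvd
  have sum_val_sq : 6 * ∑ x : ZMod b, (x.val : ℤ) ^ 2 = b * (b - 1) * (2 * b - 1) := by
    rw [sum_zmod_val_eq_sum_range fun k => (k : ℤ) ^ 2, six_mul_sum_range_sq]
  refine Int.modEq_iff_dvd.2 ⟨6 * c - (a ^ 2 + 1) * (2 * b - 3), ?_⟩
  linear_combination 6 * hc - (a ^ 2 + 1) * sum_val_sq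

theorem twelve_mul_dedekindSum_modEq {a : ℤ} (ha : IsCoprime a (b : ℤ)) :
    12 * a * b * dedekindSum a b ≡ a ^ 2 + 1 [PMOD (b : ℚ)] := by
  have hb : (b : ℚ) ≠ 0 := NeZero.ne _
  have a_unit : IsUnit (a : ZMod b) := (ZMod.coe_int_isUnit_iff_isCoprime a b).2 ha.symm
  obtain ⟨c, hc⟩ := (twelve_mul_sumValMulVal_modEq a_unit).dvd
  refine AddCommGroup.modEq_iff_zsmul.2 ⟨c + 3 * a * (b - 1), ?_⟩
  have hc' : (a ^ 2 + 1) * b - 12 * a * (sumValMulVal (a : ZMod b) : ℚ) = b ^ 2 * c := by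
    exact_mod_cast hc
  rw [dedekindSum_eq_sumValMulVal a_unit, zsmul_eq_mul]
  push_cast
  field_simp
  linear_combination -4 * hc'

theorem dvd_sub_mul_mul_sub_one_of_dedekindSum_eq {a₁ a₂ : ℤ} (h₁ : IsCoprime a₁ (b : ℤ))
    (h₂ : IsCoprime a₂ (b : ℤ)) (h : dedekindSum a₁ b = dedekindSum a₂ b) :
    (b : ℤ) ∣ (a₁ - a₂) * (a₁ * a₂ - 1) := by
  obtain ⟨c₁, hc₁⟩ := AddCommGroup.modEq_iff_zsmul.1 (twelve_mul_dedekindSum_modEq h₁)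
  obtain ⟨c₂, hc₂⟩ := AddCommGroup.modEq_iff_zsmul.1 (twelve_mul_dedekindSum_modEq h₂)
  rw [zsmul_eq_mul] at hc₁ hc₂
  refine ⟨a₂ * c₁ - a₁ * c₂, ?_⟩
  have cast_eq : (((a₁ - a₂) * (a₁ * a₂ - 1) : ℤ) : ℚ) = (b * (a₂ * c₁ - a₁ * c₂) : ℤ) := by
    push_cast
    linear_combination a₁ * hc₂ - a₂ * hc₁ + 12 * a₁ * a₂ * b * h
  exact_mod_cast cast_eq

end Residues

theorem dedekindSum_eq_iff_of_prime (p : ℕ) (hp : p.Prime) (a₁ a₂ : ℤ)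
    (h₁ : Int.gcd a₁ p = 1) (h₂ : Int.gcd a₂ p = 1) :
    dedekindSum a₁ p = dedekindSum a₂ p ↔
      a₁ ≡ a₂ [ZMOD (p : ℤ)] ∨ a₁ * a₂ ≡ 1 [ZMOD (p : ℤ)] := by
  have : NeZero p := ⟨hp.ne_zero⟩
  constructor
  · intro h
    have p_dvd : (p : ℤ) ∣ (a₁ - a₂) * (a₁ * a₂ - 1) :=
      dvd_sub_mul_mul_sub_one_of_dedekindSum_eq (Int.isCoprime_iff_gcd_eq_one.2 h₁)
        (Int.isCoprime_iff_gcd_eq_one.2 h₂) h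
    exact ((Nat.prime_iff_prime_int.1 hp).dvd_or_dvd p_dvd).imp
      (fun h => (Int.modEq_iff_dvd.2 h).symm) (fun h => (Int.modEq_iff_dvd.2 h).symm)
  · rintro (h | h)
    · exact dedekindSum_eq_of_modEq h
    · exact dedekindSum_eq_of_mul_modEq_one h
end

section
/- Fix a non-negative integer n and a positive integer b, and let a₁ and a₂ be integers with gcd(a₁, b) = 1 and gcd(a₂, b) = 1. If rₙ(a₁, b) = rₙ(a₂, b), then b divides (6·n² + 1 − a₁·a₂)·(a₂ − a₁). -/
/-- The Dedekind–Rademacher sum `rₙ(a,b) = ∑_{k=0}^{b-1} (((k·a+n)/b)) ((k/b))`. -/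
def rademacherSum (n : ℕ) (a : ℤ) (b : ℕ) : ℚ :=
  ∑ k ∈ Finset.range b, sawtooth (((k : ℚ) * a + n) / b) * sawtooth ((k : ℚ) / b)

/-!
The proof rests on the congruence `12 a b rₙ(a, b) ≡ 1 + a² + 6 n² (mod b)`, valid for `a` coprime
to `b`: for equal sums, `a₂` times the congruence for `a₁` and `a₁` times that for `a₂` have the
same left-hand side.

Since `x - ((x)) = (⌊x⌋ + ⌈x⌉) / 2`, the numbers `dₖ = 2 (n/b - (((ka + n)/b)) + a ((k/b)))` are
integers. As `k` runs over a complete residue system so does `ka + n`, hence `∑ dₖ = 2 n`, and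
expanding the square,
`∑ dₖ² = 4 n²/b + 4 (1 + a²) ∑ ((k/b))² - 8 a rₙ(a, b)`.
The sum of the `((k/b))²` is elementary, and `∑ dₖ² ≡ ∑ dₖ ≡ 0 (mod 2)` supplies the factor `2`
by which this identity can be divided.
-/

open Finset

theorem sum_range_mul_add_of_periodic {M : Type*} [AddCommMonoid M] {b : ℕ} (hb : 0 < b)
    {f : ℤ → M} (hf : Function.Periodic f b) {a : ℤ} (hab : Int.gcd a b = 1) (n : ℤ) :
    ∑ k ∈ range b, f (k * a + n) = ∑ k ∈ range b, f k := by
  have hb' : (0 : ℤ) < b := by exact_mod_cast hb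
  have emod_nonneg (z : ℤ) : 0 ≤ z % b := Int.emod_nonneg z hb'.ne'
  have emod_lt (z : ℤ) : z % b < b := Int.emod_lt_of_pos z hb'
  let residue (k : ℕ) : ℕ := ((k * a + n) % b).toNat
  have residue_cast (k : ℕ) : (residue k : ℤ) = (k * a + n) % b :=
    Int.toNat_of_nonneg (emod_nonneg _)
  have maps : Set.MapsTo residue (range b) (range b) := fun k _ ↦ by
    have := residue_cast k ▸ emod_lt (k * a + n)
    simpa using this
  have inj : Set.InjOn residue (range b) := fun k hk l hl hkl ↦ by
    have hmod : (k * a + n : ℤ) ≡ l * a + n [ZMOD b] := by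
      rw [Int.ModEq, ← residue_cast, ← residue_cast, hkl]
    have hmod' : (k : ℤ) ≡ l [ZMOD b] := by
      have := (hmod.add_right_cancel' n).cancel_right_div_gcd hb'
      rwa [Int.gcd_comm, hab, Nat.cast_one, Int.ediv_one] at this
    exact (Int.natCast_modEq_iff.mp hmod').eq_of_lt_of_lt (mem_range.mp hk) (mem_range.mp hl)
  refine sum_nbij residue maps inj (surjOn_of_injOn_of_card_le _ maps inj le_rfl) fun k _ ↦ ?_
  rw [residue_cast, Int.emod_def, mul_comm (b : ℤ)]
  exact (hf.sub_zsmul_eq _).symm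

theorem even_sum_sq_iff {ι : Type*} (s : Finset ι) (f : ι → ℤ) :
    Even (∑ i ∈ s, f i ^ 2) ↔ Even (∑ i ∈ s, f i) := by
  rw [← Int.even_sub, ← sum_sub_distrib]
  refine even_sum _ fun i _ ↦ ?_
  rw [sq, ← mul_sub_one]
  exact Int.even_mul_pred_self (f i)

theorem six_mul_sum_range_sub_sq {R : Type*} [CommRing R] (m : ℕ) (c : R) :
    6 * ∑ k ∈ range m, (k - c) ^ 2 = m * ((m - 1) * (2 * m - 1) - 6 * c * (m - 1) + 6 * c ^ 2) := by
  induction m with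
  | zero => simp
  | succ m ih => rw [sum_range_succ, mul_add, ih]; push_cast; ring

theorem even_one_add_sq_mul_sub_three {a b : ℤ} (hab : Int.gcd a b = 1) :
    Even ((1 + a ^ 2) * (b - 3)) := by
  have : Odd a ∨ Odd b := by
    by_contra! h
    simp only [Int.not_odd_iff_even, even_iff_two_dvd] at h
    simpa [hab] using Int.dvd_coe_gcd h.1 h.2
  rcases this with ha | hb
  · exact (odd_one.add_odd ha.pow).mul_right _
  · exact (hb.sub_odd (by decide)).mul_left _

theorem sawtooth_eq_sub_floor_add_ceil (x : ℚ) : sawtooth x = x - (⌊x⌋ + ⌈x⌉) / 2 := by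
  unfold sawtooth
  split_ifs with hx
  · obtain ⟨z, rfl⟩ := Int.fract_eq_zero_iff.mp hx
    rw [Int.floor_intCast, Int.ceil_intCast, add_self_div_two, sub_self]
  · rw [Int.ceil_eq_add_one_sub_fract hx]
    linarith [Int.fract_add_floor x]

theorem sawtooth_zero : sawtooth 0 = 0 := by
  simp [sawtooth]

theorem sawtooth_neg (x : ℚ) : sawtooth (-x) = -sawtooth x := by
  simp only [sawtooth_eq_sub_floor_add_ceil, Int.floor_neg, Int.ceil_neg]
  push_cast
  ring

theorem sawtooth_add_one (x : ℚ) : sawtooth (x + 1) = sawtooth x := by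
  simp only [sawtooth_eq_sub_floor_add_ceil, Int.floor_add_one, Int.ceil_add_one]
  push_cast
  ring

theorem sawtooth_of_pos_of_lt_one {x : ℚ} (hx₀ : 0 < x) (hx₁ : x < 1) :
    sawtooth x = x - 1 / 2 := by
  have hfract : Int.fract x = x := Int.fract_eq_self.mpr ⟨hx₀.le, hx₁⟩
  rw [sawtooth, hfract, if_neg hx₀.ne']

theorem periodic_sawtooth_div {b : ℕ} (hb : b ≠ 0) :
    Function.Periodic (fun z : ℤ ↦ sawtooth (z / b)) b := fun z ↦ by
  have hb' : (b : ℚ) ≠ 0 := by exact_mod_cast hb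
  simp only [Int.cast_add, Int.cast_natCast, add_div, div_self hb', sawtooth_add_one]

theorem sum_sawtooth_div (b : ℕ) : ∑ k ∈ range b, sawtooth (k / b) = 0 := by
  rcases b.eq_zero_or_pos with rfl | hb
  · simp
  have hneg := sum_range_mul_add_of_periodic hb (periodic_sawtooth_div hb.ne') (a := -1)
    (by simp) 0
  simp only [mul_neg_one, add_zero, Int.cast_neg, Int.cast_natCast, neg_div, sawtooth_neg,
    sum_neg_distrib] at hneg
  linarith

theorem sum_sawtooth_mul_add_div {b : ℕ} (hb : 0 < b) {a : ℤ} (hab : Int.gcd a b = 1) (n : ℤ) :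
    ∑ k ∈ range b, sawtooth ((k * a + n) / b) = 0 := by
  have := sum_range_mul_add_of_periodic hb (periodic_sawtooth_div hb.ne') hab n
  push_cast at this
  rw [this, sum_sawtooth_div]

theorem sum_sawtooth_sq_mul_add_div {b : ℕ} (hb : 0 < b) {a : ℤ} (hab : Int.gcd a b = 1) (n : ℤ) :
    ∑ k ∈ range b, sawtooth ((k * a + n) / b) ^ 2 = ∑ k ∈ range b, sawtooth (k / b) ^ 2 := by
  have := sum_range_mul_add_of_periodic hb ((periodic_sawtooth_div hb.ne').comp (· ^ 2)) hab n
  simpa using this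

theorem sum_sawtooth_div_sq {b : ℕ} (hb : 0 < b) :
    ∑ k ∈ range b, sawtooth (k / b) ^ 2 = (b - 1) * (b - 2) / (12 * b) := by
  have hb' : (0 : ℚ) < b := by exact_mod_cast hb
  have hterm : ∀ k ∈ range b, sawtooth (k / b) ^ 2 =
      (1 / b) ^ 2 * ((k : ℚ) - b / 2) ^ 2 - if k = 0 then 1 / 4 else 0 := fun k hk ↦ by
    split_ifs with hk₀
    · rw [hk₀, Nat.cast_zero, zero_div, sawtooth_zero]
      field_simp
      ring
    · have hkpos : (0 : ℚ) < k := by exact_mod_cast Nat.pos_of_ne_zero hk₀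
      have hklt : (k : ℚ) < b := by exact_mod_cast mem_range.mp hk
      rw [sawtooth_of_pos_of_lt_one (div_pos hkpos hb') ((div_lt_one hb').mpr hklt)]
      field_simp
      ring
  have hsum : ∑ k ∈ range b, ((k : ℚ) - b / 2) ^ 2 = (b : ℚ) * (b ^ 2 + 2) / 12 := by
    linear_combination six_mul_sum_range_sub_sq b (b / 2 : ℚ) / 6
  rw [sum_congr rfl hterm, sum_sub_distrib, ← mul_sum, hsum, sum_ite_eq',
    if_pos (mem_range.mpr hb)]
  field_simp
  ring

/-- The integer `dₖ = 2 (n/b - (((ka + n)/b)) + a ((k/b)))`, whose square has the general term of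
`rₙ(a, b)` as its cross term. The encoding by floors and ceilings makes integrality automatic. -/
def sawtoothDefect (n : ℕ) (a : ℤ) (b k : ℕ) : ℤ :=
  ⌊((k : ℚ) * a + n) / b⌋ + ⌈((k : ℚ) * a + n) / b⌉ - a * (⌊(k : ℚ) / b⌋ + ⌈(k : ℚ) / b⌉)

theorem sawtoothDefect_cast (n : ℕ) (a : ℤ) (b k : ℕ) :
    (sawtoothDefect n a b k : ℚ) =
      2 * (n / b - sawtooth ((k * a + n) / b) + a * sawtooth (k / b)) := by
  simp only [sawtoothDefect, sawtooth_eq_sub_floor_add_ceil]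
  push_cast
  ring

theorem sum_sawtoothDefect (n : ℕ) {b : ℕ} (hb : 0 < b) {a : ℤ} (hab : Int.gcd a b = 1) :
    ∑ k ∈ range b, sawtoothDefect n a b k = 2 * n := by
  have hb' : (b : ℚ) ≠ 0 := by exact_mod_cast hb.ne'
  have hna := sum_sawtooth_mul_add_div hb hab n
  rw [Int.cast_natCast] at hna
  have : (∑ k ∈ range b, sawtoothDefect n a b k : ℚ) = 2 * n := by
    simp only [sawtoothDefect_cast, ← mul_sum, sum_add_distrib, sum_sub_distrib, hna,
      sum_sawtooth_div, sum_const, card_range, nsmul_eq_mul]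
    field_simp
    ring
  exact_mod_cast this

theorem sum_sawtoothDefect_sq (n : ℕ) {b : ℕ} (hb : 0 < b) {a : ℤ} (hab : Int.gcd a b = 1) :
    ∑ k ∈ range b, (sawtoothDefect n a b k : ℚ) ^ 2 =
      4 * n ^ 2 / b + (1 + a ^ 2) * ((b - 1) * (b - 2)) / (3 * b)
        - 8 * a * rademacherSum n a b := by
  have hb' : (b : ℚ) ≠ 0 := by exact_mod_cast hb.ne'
  have hna := sum_sawtooth_mul_add_div hb hab n
  have hna_sq := sum_sawtooth_sq_mul_add_div hb hab n
  rw [Int.cast_natCast] at hna hna_sq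
  have expand (k : ℕ) : (sawtoothDefect n a b k : ℚ) ^ 2 =
      4 * (n / b) ^ 2 + 4 * sawtooth ((k * a + n) / b) ^ 2 + 4 * a ^ 2 * sawtooth (k / b) ^ 2
        - 8 * (n / b) * sawtooth ((k * a + n) / b) + 8 * (n / b) * a * sawtooth (k / b)
        - 8 * a * (sawtooth ((k * a + n) / b) * sawtooth (k / b)) := by
    rw [sawtoothDefect_cast]
    ring
  simp only [rademacherSum, expand, sum_add_distrib, sum_sub_distrib, ← mul_sum, hna, hna_sq,
    sum_sawtooth_div, sum_sawtooth_div_sq hb, sum_const, card_range, nsmul_eq_mul]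
  field_simp
  ring

theorem exists_twelve_mul_rademacherSum_eq (n : ℕ) {b : ℕ} (hb : 0 < b) {a : ℤ}
    (hab : Int.gcd a b = 1) :
    ∃ m : ℤ, 12 * a * b * rademacherSum n a b = 1 + a ^ 2 + 6 * n ^ 2 + b * m := by
  have hb' : (b : ℚ) ≠ 0 := by exact_mod_cast hb.ne'
  have even_sum_sq : Even (∑ k ∈ range b, sawtoothDefect n a b k ^ 2) := by
    rw [even_sum_sq_iff, sum_sawtoothDefect n hb hab]
    exact even_two_mul _
  obtain ⟨m, hm⟩ :=
    ((even_one_add_sq_mul_sub_three hab).sub (even_sum_sq.mul_left 3)).two_dvd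
  refine ⟨m, ?_⟩
  have hsq := sum_sawtoothDefect_sq n hb hab
  qify at hm
  rw [hsq] at hm
  field_simp at hm
  linear_combination hm / 2

theorem rademacherSum_eq_imp_dvd (n : ℕ) (b : ℕ) (hb : 0 < b) (a₁ a₂ : ℤ)
    (h₁ : Int.gcd a₁ b = 1) (h₂ : Int.gcd a₂ b = 1)
    (h : rademacherSum n a₁ b = rademacherSum n a₂ b) :
    (b : ℤ) ∣ (6 * (n : ℤ) ^ 2 + 1 - a₁ * a₂) * (a₂ - a₁) := by
  obtain ⟨m₁, hm₁⟩ := exists_twelve_mul_rademacherSum_eq n hb h₁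
  obtain ⟨m₂, hm₂⟩ := exists_twelve_mul_rademacherSum_eq n hb h₂
  refine ⟨a₁ * m₂ - a₂ * m₁, ?_⟩
  rw [h] at hm₁
  qify
  linear_combination a₁ * hm₂ - a₂ * hm₁
end

section
/- For any non-negative integer n, any positive integer b, and any integer a with gcd(a, b) = 1, the rational number 12·b·rₙ(a, b) is an integer. -/
/-- The integer `2 * b * ((m / b))` for `0 < b`: the sawtooth value cleared of denominators, written
with `m % b` so that congruences modulo `b` apply to it. -/
def scaledSawtooth (b : ℕ) (m : ℤ) : ℤ := if m % b = 0 then 0 else 2 * (m % b) - b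

theorem scaledSawtooth_modEq (b : ℕ) (m : ℤ) : scaledSawtooth b m ≡ 2 * m [ZMOD b] := by
  have hmod : m % b ≡ m [ZMOD b] := Int.mod_modEq m b
  unfold scaledSawtooth
  split_ifs with hzero
  · rw [hzero] at hmod
    simpa using hmod.mul_left 2
  · simpa using (hmod.mul_left 2).sub (Int.modEq_zero_iff_dvd.2 (dvd_refl (b : ℤ)))

theorem cast_scaledSawtooth {b : ℕ} (hb : 0 < b) (m : ℤ) :
    (scaledSawtooth b m : ℚ) = 2 * b * sawtooth (m / b) := by
  have hb' : (b : ℚ) ≠ 0 := by positivity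
  have hfract : Int.fract ((m : ℚ) / b) = (m % b : ℤ) / b :=
    Int.fract_div_intCast_eq_div_intCast_mod
  have hzero : Int.fract ((m : ℚ) / b) = 0 ↔ m % b = 0 := by
    rw [hfract, div_eq_zero_iff, or_iff_left hb', Int.cast_eq_zero]
  simp only [scaledSawtooth, sawtooth, hzero]
  split_ifs
  · simp
  · rw [hfract]
    push_cast
    field_simp

theorem cast_sum_scaledSawtooth_mul {b : ℕ} (hb : 0 < b) (n : ℕ) (a : ℤ) :
    ((∑ k ∈ Finset.range b, scaledSawtooth b (k * a + n) * scaledSawtooth b k : ℤ) : ℚ) =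
      4 * b ^ 2 * rademacherSum n a b := by
  rw [rademacherSum, Finset.mul_sum, Int.cast_sum]
  refine Finset.sum_congr rfl fun k _ ↦ ?_
  rw [Int.cast_mul, cast_scaledSawtooth hb, cast_scaledSawtooth hb]
  push_cast
  ring

theorem dvd_two_mul_sum_range_id_cast (N : ℕ) :
    (N : ℤ) ∣ 2 * ∑ k ∈ Finset.range N, (k : ℤ) := by
  have hdvd : N ∣ 2 * ∑ k ∈ Finset.range N, k :=
    ⟨N - 1, by rw [mul_comm, Finset.sum_range_id_mul_two]⟩
  simpa using Int.natCast_dvd_natCast.2 hdvd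

theorem six_mul_sum_range_sq_cast (N : ℕ) :
    6 * ∑ k ∈ Finset.range N, (k : ℤ) ^ 2 = N * ((N - 1) * (2 * N - 1)) := by
  induction N with
  | zero => simp
  | succ N ih =>
    rw [Finset.sum_range_succ, mul_add, ih]
    push_cast
    ring

theorem dvd_twelve_mul_sum_range_linear_mul (N : ℕ) (a c : ℤ) :
    (N : ℤ) ∣ 12 * ∑ k ∈ Finset.range N, (k * a + c) * (k : ℤ) := by
  have hsplit : 12 * ∑ k ∈ Finset.range N, (k * a + c) * (k : ℤ) =
      2 * a * (6 * ∑ k ∈ Finset.range N, (k : ℤ) ^ 2) +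
        6 * c * (2 * ∑ k ∈ Finset.range N, (k : ℤ)) := by
    simp only [Finset.mul_sum, ← Finset.sum_add_distrib]
    exact Finset.sum_congr rfl fun k _ ↦ by ring
  rw [hsplit]
  exact dvd_add ((Dvd.intro _ (six_mul_sum_range_sq_cast N).symm).mul_left _)
    ((dvd_two_mul_sum_range_id_cast N).mul_left _)

theorem dvd_three_mul_sum_scaledSawtooth_mul (b : ℕ) (a c : ℤ) :
    (b : ℤ) ∣
      3 * ∑ k ∈ Finset.range b, scaledSawtooth b (k * a + c) * scaledSawtooth b k := by
  have hmod : 3 * ∑ k ∈ Finset.range b, scaledSawtooth b (k * a + c) * scaledSawtooth b k ≡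
      3 * ∑ k ∈ Finset.range b, 2 * (k * a + c) * (2 * (k : ℤ)) [ZMOD b] :=
    Int.ModEq.mul_left 3 <| Int.ModEq.sum fun k _ ↦
      (scaledSawtooth_modEq b (k * a + c)).mul (scaledSawtooth_modEq b k)
  have hscale : 3 * ∑ k ∈ Finset.range b, 2 * (k * a + c) * (2 * (k : ℤ)) =
      12 * ∑ k ∈ Finset.range b, (k * a + c) * (k : ℤ) := by
    simp only [Finset.mul_sum]
    exact Finset.sum_congr rfl fun k _ ↦ by ring
  rw [hmod.dvd_iff, hscale]
  exact dvd_twelve_mul_sum_range_linear_mul b a c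

theorem twelve_mul_rademacherSum_isInt_general (n : ℕ) {b : ℕ} (hb : 0 < b) (a : ℤ) :
    ∃ m : ℤ, 12 * (b : ℚ) * rademacherSum n a b = m := by
  obtain ⟨m, hm⟩ := dvd_three_mul_sum_scaledSawtooth_mul b a n
  have hb' : (b : ℚ) ≠ 0 := by positivity
  refine ⟨m, mul_left_cancel₀ hb' ?_⟩
  calc (b : ℚ) * (12 * b * rademacherSum n a b)
    _ = 3 * (4 * b ^ 2 * rademacherSum n a b) := by ring
    _ = b * m := by
      rw [← cast_sum_scaledSawtooth_mul hb]
      exact_mod_cast hm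

theorem twelve_mul_rademacherSum_isInt (n : ℕ) (b : ℕ) (hb : 0 < b) (a : ℤ)
    (h : Int.gcd a b = 1) :
    ∃ m : ℤ, 12 * (b : ℚ) * rademacherSum n a b = (m : ℚ) :=
  twelve_mul_rademacherSum_isInt_general n hb a
end

section
/- For any relatively prime positive integers a and b, one has 12·a·b·(s(a, b) + s(b, a)) = −3·a·b + a² + b² + 1. -/
/-! Multiplication by `a` permutes the nonzero residues mod `b`, so the fractional parts `{ka/b}`
have the same moments as the `k/b`. Expanding `⌊ka/b⌋ = ka/b - {ka/b}`, the sums over `k` of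
`⌊ka/b⌋²` and `k⌊ka/b⌋` are both affine functions of `s(a, b)`, since the only mixed term is
`∑ (k/b){ka/b}`. Splitting the lattice points `(k, j)` with `0 < k < b`, `0 < j < a` along the
diagonal `jb = ka`, which contains none of them, and summing the coordinate `j` relates `∑ ⌊ka/b⌋²`
to `∑ j⌊jb/a⌋`, hence `s(a, b)` to `s(b, a)`. -/

open Finset

theorem not_dvd_mul_of_mem_Ico {a : ℤ} {b k : ℕ} (hab : IsCoprime a b) (hk : k ∈ Ico 1 b) :
    ¬ (b : ℤ) ∣ k * a := by
  obtain ⟨hk_pos, hk_lt⟩ := mem_Ico.1 hk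
  intro h
  exact Nat.not_dvd_of_pos_of_lt hk_pos hk_lt
    (Int.natCast_dvd_natCast.1 (hab.symm.dvd_of_dvd_mul_right h))

theorem sum_Ico_mul_emod {M : Type*} [AddCommMonoid M] {a : ℤ} {b : ℕ} (hab : IsCoprime a b)
    (f : ℤ → M) : ∑ k ∈ Ico 1 b, f (k * a % b) = ∑ k ∈ Ico 1 b, f k := by
  have toNat_emod (k : ℕ) (hk : k ∈ Ico 1 b) : ((k * a % b).toNat : ℤ) = k * a % b :=
    Int.toNat_of_nonneg (Int.emod_nonneg _ (by grind))
  have mapsTo : Set.MapsTo (fun k : ℕ ↦ (k * a % b).toNat) (Ico 1 b) (Ico 1 b) := by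
    intro k hk
    have ne_zero : k * a % b ≠ 0 := fun h ↦
      not_dvd_mul_of_mem_Ico hab hk (Int.dvd_of_emod_eq_zero h)
    have lt : k * a % b < b := Int.emod_lt_of_pos _ (by grind)
    have := toNat_emod k hk
    simp only [coe_Ico, Set.mem_Ico]
    lia
  have injOn : Set.InjOn (fun k : ℕ ↦ (k * a % b).toNat) (Ico 1 b) := by
    intro k hk l hl hkl
    have modEq : k * a ≡ l * a [ZMOD b] := by
      rw [Int.ModEq, ← toNat_emod k hk, ← toNat_emod l hl]
      exact congrArg Nat.cast hkl
    have dvd : (b : ℤ) ∣ (l - k) * a := by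
      rw [sub_mul]
      exact modEq.dvd
    have : k ≡ l [MOD b] :=
      Int.natCast_modEq_iff.1 (Int.modEq_of_dvd (hab.symm.dvd_of_dvd_mul_right dvd))
    exact this.eq_of_lt_of_lt (mem_Ico.1 hk).2 (mem_Ico.1 hl).2
  exact sum_nbij _ mapsTo injOn (surjOn_of_injOn_of_card_le _ mapsTo injOn le_rfl)
    fun k hk ↦ by rw [toNat_emod k hk]

theorem sum_Ico_fract_mul_div {M : Type*} [AddCommMonoid M] {a : ℤ} {b : ℕ}
    (hab : IsCoprime a b) (f : ℚ → M) :
    ∑ k ∈ Ico 1 b, f (Int.fract ((k : ℚ) * a / b)) = ∑ k ∈ Ico 1 b, f ((k : ℚ) / b) := by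
  have fract_eq (k : ℕ) : Int.fract ((k : ℚ) * a / b) = ((k * a % b : ℤ) : ℚ) / b := by
    exact_mod_cast Int.fract_div_intCast_eq_div_intCast_mod (k := ℚ) (m := k * a) (n := b)
  simpa only [fract_eq, Int.cast_natCast] using sum_Ico_mul_emod hab fun r ↦ f ((r : ℚ) / b)

theorem two_mul_sum_Ico_one_cast {R : Type*} [CommRing R] (n : ℕ) :
    2 * ∑ k ∈ Ico 1 n, (k : R) = n * (n - 1) := by
  induction n with
  | zero => simp
  | succ n ih =>
    obtain rfl | hn := n.eq_zero_or_pos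
    · simp
    · rw [sum_Ico_succ_top hn, mul_add, ih]
      push_cast
      ring

theorem six_mul_sum_Ico_one_cast_sq {R : Type*} [CommRing R] (n : ℕ) :
    6 * ∑ k ∈ Ico 1 n, (k : R) ^ 2 = n * (n - 1) * (2 * n - 1) := by
  induction n with
  | zero => simp
  | succ n ih =>
    obtain rfl | hn := n.eq_zero_or_pos
    · simp
    · rw [sum_Ico_succ_top hn, mul_add, ih]
      push_cast
      ring

theorem sum_Ico_div {b : ℕ} (hb : b ≠ 0) : ∑ k ∈ Ico 1 b, (k : ℚ) / b = (b - 1) / 2 := by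
  rw [← sum_div]
  field_simp
  linear_combination two_mul_sum_Ico_one_cast (R := ℚ) b

theorem sum_Ico_div_sq {b : ℕ} (hb : b ≠ 0) :
    ∑ k ∈ Ico 1 b, ((k : ℚ) / b) ^ 2 = (b - 1) * (2 * b - 1) / (6 * b) := by
  simp only [div_pow, ← sum_div]
  field_simp
  linear_combination six_mul_sum_Ico_one_cast_sq (R := ℚ) b

theorem sawtooth_mul_div {a : ℤ} {b k : ℕ} (hab : IsCoprime a b) (hk : k ∈ Ico 1 b) :
    sawtooth ((k : ℚ) * a / b) = Int.fract ((k : ℚ) * a / b) - 1 / 2 := by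
  refine if_neg fun h ↦ not_dvd_mul_of_mem_Ico hab hk ?_
  obtain ⟨n, hn⟩ := Int.fract_eq_zero_iff.1 h
  have hb : (b : ℚ) ≠ 0 := by
    rw [Nat.cast_ne_zero]
    grind
  rw [eq_div_iff hb] at hn
  exact ⟨n, by rw [mul_comm (b : ℤ)]; exact_mod_cast hn.symm⟩

theorem sawtooth_div {b k : ℕ} (hk : k ∈ Ico 1 b) :
    sawtooth ((k : ℚ) / b) = (k : ℚ) / b - 1 / 2 := by
  have lt : (k : ℚ) / b < 1 := by
    rw [div_lt_one₀] <;> norm_cast <;> grind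
  simpa [Int.fract_eq_self.2 ⟨by positivity, lt⟩] using sawtooth_mul_div isCoprime_one_left hk

theorem dedekindSum_eq_sum_Ico_fract {a : ℤ} {b : ℕ} (hab : IsCoprime a b) (hb : b ≠ 0) :
    dedekindSum a b = ∑ k ∈ Ico 1 b, (k : ℚ) / b * Int.fract ((k : ℚ) * a / b) - (b - 1) / 4 := by
  have sum_fract : ∑ k ∈ Ico 1 b, Int.fract ((k : ℚ) * a / b) = (b - 1) / 2 :=
    (sum_Ico_fract_mul_div hab id).trans (sum_Ico_div hb)
  have sum_quarter : ∑ k ∈ Ico 1 b, (1 / 4 : ℚ) = (b - 1) / 4 := by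
    rw [sum_const, Nat.card_Ico, nsmul_eq_mul, Nat.cast_pred (by lia)]
    ring
  calc
    dedekindSum a b
      = ∑ k ∈ Ico 1 b, sawtooth ((k : ℚ) * a / b) * sawtooth ((k : ℚ) / b) := by
        rw [dedekindSum, sum_range_eq_add_Ico _ (by lia)]
        simp [sawtooth]
    _ = ∑ k ∈ Ico 1 b, ((k : ℚ) / b * Int.fract ((k : ℚ) * a / b)
          - 1 / 2 * Int.fract ((k : ℚ) * a / b) - 1 / 2 * (k / b) + 1 / 4) :=
        sum_congr rfl fun k hk ↦ by
          rw [sawtooth_mul_div hab hk, sawtooth_div hk]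
          ring
    _ = ∑ k ∈ Ico 1 b, (k : ℚ) / b * Int.fract ((k : ℚ) * a / b) - (b - 1) / 4 := by
        rw [sum_add_distrib, sum_sub_distrib, sum_sub_distrib, ← mul_sum, ← mul_sum, sum_fract,
          sum_Ico_div hb, sum_quarter]
        ring

theorem sum_Ico_floor_mul_div {a : ℤ} {b : ℕ} (hab : IsCoprime a b) (hb : b ≠ 0) :
    ∑ k ∈ Ico 1 b, (⌊(k : ℚ) * a / b⌋ : ℚ) = (a - 1) * (b - 1) / 2 := by
  calc
    ∑ k ∈ Ico 1 b, (⌊(k : ℚ) * a / b⌋ : ℚ)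
      = ∑ k ∈ Ico 1 b, (a * ((k : ℚ) / b) - Int.fract ((k : ℚ) * a / b)) :=
        sum_congr rfl fun k _ ↦ by rw [← Int.self_sub_fract]; ring
    _ = a * ((b - 1) / 2) - (b - 1) / 2 := by
        rw [sum_sub_distrib, ← mul_sum, sum_Ico_fract_mul_div hab fun x ↦ x, sum_Ico_div hb]
    _ = (a - 1) * (b - 1) / 2 := by ring

theorem sum_Ico_floor_mul_div_sq {a : ℤ} {b : ℕ} (hab : IsCoprime a b) (hb : b ≠ 0) :
    ∑ k ∈ Ico 1 b, (⌊(k : ℚ) * a / b⌋ : ℚ) ^ 2 =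
      (a ^ 2 + 1) * ((b - 1) * (2 * b - 1) / (6 * b))
        - 2 * a * (dedekindSum a b + (b - 1) / 4) := by
  calc
    ∑ k ∈ Ico 1 b, (⌊(k : ℚ) * a / b⌋ : ℚ) ^ 2
      = ∑ k ∈ Ico 1 b, ((a : ℚ) ^ 2 * ((k : ℚ) / b) ^ 2 + Int.fract ((k : ℚ) * a / b) ^ 2
          - 2 * a * ((k : ℚ) / b * Int.fract ((k : ℚ) * a / b))) :=
        sum_congr rfl fun k _ ↦ by rw [← Int.self_sub_fract]; ring
    _ = _ := by
        rw [sum_sub_distrib, sum_add_distrib, ← mul_sum, ← mul_sum,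
          sum_Ico_fract_mul_div hab (· ^ 2), sum_Ico_div_sq hb, dedekindSum_eq_sum_Ico_fract hab hb]
        ring

theorem sum_Ico_mul_floor_mul_div {a : ℤ} {b : ℕ} (hab : IsCoprime a b) (hb : b ≠ 0) :
    ∑ k ∈ Ico 1 b, (k : ℚ) * ⌊(k : ℚ) * a / b⌋ =
      a * ((b - 1) * (2 * b - 1) / 6) - b * (dedekindSum a b + (b - 1) / 4) := by
  calc
    ∑ k ∈ Ico 1 b, (k : ℚ) * ⌊(k : ℚ) * a / b⌋
      = ∑ k ∈ Ico 1 b, ((a : ℚ) * b * ((k : ℚ) / b) ^ 2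
          - b * ((k : ℚ) / b * Int.fract ((k : ℚ) * a / b))) :=
        sum_congr rfl fun k _ ↦ by rw [← Int.self_sub_fract]; field_simp
    _ = _ := by
        rw [sum_sub_distrib, ← mul_sum, ← mul_sum, sum_Ico_div_sq hb,
          dedekindSum_eq_sum_Ico_fract hab hb]
        field_simp
        ring

theorem filter_Ico_mul_le_mul {a b k : ℕ} (hk : k < b) :
    {j ∈ Ico 1 a | j * b ≤ k * a} = Icc 1 (k * a / b) := by
  ext j
  simp only [mem_filter, mem_Ico, mem_Icc, Nat.le_div_iff_mul_le (Nat.zero_lt_of_lt hk)]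
  refine ⟨fun ⟨⟨hj, _⟩, hle⟩ ↦ ⟨hj, hle⟩, fun ⟨hj, hle⟩ ↦ ⟨⟨hj, ?_⟩, hle⟩⟩
  by_contra! haj
  have : k * a < j * b := calc
    k * a ≤ k * j := Nat.mul_le_mul_left k haj
    _ < b * j := Nat.mul_lt_mul_of_pos_right hk hj
    _ = j * b := mul_comm b j
  lia

theorem sum_Ico_sum_Ico_eq_add_of_coprime {M : Type*} [AddCommMonoid M] {a b : ℕ}
    (hab : a.Coprime b) (f : ℕ → ℕ → M) :
    ∑ k ∈ Ico 1 b, ∑ j ∈ Ico 1 a, f k j =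
      ∑ k ∈ Ico 1 b, ∑ j ∈ Icc 1 (k * a / b), f k j +
        ∑ j ∈ Ico 1 a, ∑ k ∈ Icc 1 (j * b / a), f k j := by
  have not_le_iff (k : ℕ) (hk : k ∈ Ico 1 b) (j : ℕ) : ¬ j * b ≤ k * a ↔ k * a ≤ j * b := by
    have : k * a ≠ j * b := fun h ↦ not_dvd_mul_of_mem_Ico (Nat.isCoprime_iff_coprime.2 hab) hk
      (by exact_mod_cast Dvd.intro_left j h.symm)
    lia
  calc
    ∑ k ∈ Ico 1 b, ∑ j ∈ Ico 1 a, f k j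
      = ∑ k ∈ Ico 1 b, (∑ j ∈ Ico 1 a with j * b ≤ k * a, f k j +
          ∑ j ∈ Ico 1 a with k * a ≤ j * b, f k j) :=
        sum_congr rfl fun k hk ↦ by
          rw [← sum_filter_add_sum_filter_not (Ico 1 a) (fun j ↦ j * b ≤ k * a)]
          simp only [not_le_iff k hk]
    _ = ∑ k ∈ Ico 1 b, ∑ j ∈ Ico 1 a with j * b ≤ k * a, f k j +
          ∑ j ∈ Ico 1 a, ∑ k ∈ Ico 1 b with k * a ≤ j * b, f k j := by
        rw [sum_add_distrib]
        refine congrArg _ (sum_comm' fun k j ↦ ?_)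
        simp only [mem_filter]
        tauto
    _ = ∑ k ∈ Ico 1 b, ∑ j ∈ Icc 1 (k * a / b), f k j +
          ∑ j ∈ Ico 1 a, ∑ k ∈ Icc 1 (j * b / a), f k j := by
        congr 1 <;> refine sum_congr rfl fun i hi ↦ ?_ <;>
          rw [filter_Ico_mul_le_mul (mem_Ico.1 hi).2]

theorem sum_floor_sq_add_sum_floor_add_two_mul_sum_mul_floor {a b : ℕ} (hab : a.Coprime b) :
    ∑ k ∈ Ico 1 b, (⌊(k : ℚ) * a / b⌋ : ℚ) ^ 2 + ∑ k ∈ Ico 1 b, (⌊(k : ℚ) * a / b⌋ : ℚ) +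
      2 * ∑ j ∈ Ico 1 a, (j : ℚ) * ⌊(j : ℚ) * b / a⌋ = (b - 1) * (a * (a - 1)) := by
  have floor_eq (k m n : ℕ) : (⌊(k : ℚ) * m / n⌋ : ℚ) = (k * m / n : ℕ) := by
    rw [← Nat.cast_mul, Rat.floor_natCast_div_natCast, ← Int.natCast_ediv, Int.cast_natCast]
  obtain rfl | hb := b.eq_zero_or_pos
  · simp_all
  have below (k : ℕ) : (⌊(k : ℚ) * a / b⌋ : ℚ) ^ 2 + ⌊(k : ℚ) * a / b⌋ =
      2 * ∑ j ∈ Icc 1 (k * a / b), (j : ℚ) := by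
    rw [← Ico_add_one_right_eq_Icc, two_mul_sum_Ico_one_cast, floor_eq]
    push_cast
    ring
  have above (j : ℕ) : (j : ℚ) * ⌊(j : ℚ) * b / a⌋ = ∑ _k ∈ Icc 1 (j * b / a), (j : ℚ) := by
    rw [sum_const, Nat.card_Icc, Nat.add_sub_cancel, nsmul_eq_mul, floor_eq, mul_comm]
  simp only [← sum_add_distrib, below, above, ← mul_sum]
  rw [← mul_add, ← sum_Ico_sum_Ico_eq_add_of_coprime hab fun _ j ↦ (j : ℚ), sum_const,
    Nat.card_Ico, nsmul_eq_mul, Nat.cast_pred hb, mul_left_comm, two_mul_sum_Ico_one_cast]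

theorem dedekindSum_reciprocity (a b : ℕ) (ha : 0 < a) (hb : 0 < b)
    (hab : Nat.Coprime a b) :
    12 * (a : ℚ) * b * (dedekindSum a b + dedekindSum b a) =
      -3 * (a : ℚ) * b + (a : ℚ) ^ 2 + (b : ℚ) ^ 2 + 1 := by
  have coprime : IsCoprime (a : ℤ) b := Nat.isCoprime_iff_coprime.2 hab
  have lattice := sum_floor_sq_add_sum_floor_add_two_mul_sum_mul_floor hab
  have floor_sq := sum_Ico_floor_mul_div_sq coprime hb.ne'
  have floor := sum_Ico_floor_mul_div coprime hb.ne'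
  have mul_floor := sum_Ico_mul_floor_mul_div coprime.symm ha.ne'
  push_cast at floor_sq floor mul_floor
  rw [floor_sq, floor, mul_floor] at lattice
  field_simp at lattice
  linear_combination -lattice / 8
end
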